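/- (SU(2) ⊕ GL(r,ℍ) decomposition of endomorphisms.) Let V be a real vector space of dimension 4r (r ≥ 1) with a quaternionic triple (J^1,J^2,J^3). If T ∈ End(V) satisfies T ∘ J^a - J^a ∘ T ∈ span_ℝ{J^1,J^2,J^3} for each a ∈ {1,2,3}, then there exist unique real numbers p_1,p_2,p_3 and a unique T_0 ∈ End(V) commuting with J^1, J^2 and J^3 such that T = Σ_a p_a J^a + T_0; moreover p_a = -tr(J^a ∘ T)/(4r). -/

import Mathlib

noncomputable section

/-- The totally antisymmetric Levi-Civita symbol on `Fin 3`, with `eps3 0 1 2 = 1`. -/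
def eps3 (a b c : Fin 3) : ℝ :=
  (((b.val : ℝ) - (a.val : ℝ)) * ((c.val : ℝ) - (b.val : ℝ)) * ((c.val : ℝ) - (a.val : ℝ))) / 2

/-- A quaternionic triple on a real vector space `V`:
`J^a ∘ J^b = -δ^{ab} id_V + Σ_c ε^{abc} J^c`. -/
def IsQuatTriple {V : Type*} [AddCommGroup V] [Module ℝ V]
    (J : Fin 3 → Module.End ℝ V) : Prop :=
  ∀ a b, J a * J b = -(if a = b then (1 : Module.End ℝ V) else 0) + ∑ c, eps3 a b c • J c

/-!
Averaging `T` over the unit quaternions `1, J¹, J², J³` gives `¼(T - ∑ Jᵃ T Jᵃ)`, which commutes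
with every `Jᵃ`, and `T` differs from it by `¼ ∑ Jᵃ [T, Jᵃ]`. If each `[T, Jᵃ]` lies in the span of
the triple, this difference lies in the span of `1` and the triple, and its scalar part also
commutes with the triple. The coefficients are read off by traces: if `S` commutes with the triple
and `b ≠ a`, then conjugation by `Jᵇ` negates `Jᵃ S`, so `tr (Jᵃ S) = 0`.
-/

theorem eps3_rotate (a b c : Fin 3) : eps3 b c a = eps3 a b c := by
  simp only [eps3]
  ring

theorem eps3_swap (a b c : Fin 3) : eps3 b a c = -eps3 a b c := by
  simp only [eps3]
  ring

theorem trace_eq_zero_of_isUnit_of_anticommute {R M : Type*} [CommRing R] [IsAddTorsionFree R]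
    [AddCommGroup M] [Module R M] {X U : Module.End R M} (hU : IsUnit U)
    (h : U * X = -(X * U)) : LinearMap.trace R M X = 0 := by
  obtain ⟨u, rfl⟩ := hU
  have hconj : (u : Module.End R M) * X * (u⁻¹ : (Module.End R M)ˣ) = -X := by
    rw [h, neg_mul, Units.mul_inv_cancel_right]
  have htrace := LinearMap.trace_conj R X u
  rw [hconj, map_neg] at htrace
  exact self_eq_neg.mp htrace.symm

namespace IsQuatTriple

variable {V : Type*} [AddCommGroup V] [Module ℝ V] {J : Fin 3 → Module.End ℝ V}

theorem mul_self (hJ : IsQuatTriple J) (a : Fin 3) : J a * J a = -1 := by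
  have heps (c : Fin 3) : eps3 a a c = 0 := self_eq_neg.mp (eps3_swap a a c)
  simp [hJ a a, heps]

theorem isUnit (hJ : IsQuatTriple J) (a : Fin 3) : IsUnit (J a) :=
  .of_pow_eq_one (n := 4) (by simp [pow_succ, hJ.mul_self]) four_ne_zero

theorem mul_anticomm (hJ : IsQuatTriple J) {a b : Fin 3} (hab : a ≠ b) :
    J a * J b = -(J b * J a) := by
  simp [hJ a b, hJ b a, hab, hab.symm, eps3_swap a b]

theorem trace_mul_eq_zero_of_commute (hJ : IsQuatTriple J) {S : Module.End ℝ V}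
    (hS : ∀ a, Commute S (J a)) (a : Fin 3) : LinearMap.trace ℝ V (J a * S) = 0 := by
  obtain ⟨b, hba⟩ := exists_ne a
  refine trace_eq_zero_of_isUnit_of_anticommute (hJ.isUnit b) ?_
  rw [← mul_assoc, hJ.mul_anticomm hba, neg_mul, mul_assoc, mul_assoc, (hS b).eq]

theorem trace_mul [FiniteDimensional ℝ V] (hJ : IsQuatTriple J) (a b : Fin 3) :
    LinearMap.trace ℝ V (J a * J b) = if a = b then -(Module.finrank ℝ V : ℝ) else 0 := by
  have htrace (c : Fin 3) : LinearMap.trace ℝ V (J c) = 0 := by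
    simpa only [mul_one] using hJ.trace_mul_eq_zero_of_commute (fun d => Commute.one_left (J d)) c
  rw [hJ a b]
  split_ifs <;> simp [htrace]

theorem coeff_mul_finrank_eq_neg_trace [FiniteDimensional ℝ V] (hJ : IsQuatTriple J)
    {S : Module.End ℝ V} (hS : ∀ a, Commute S (J a)) (q : Fin 3 → ℝ) (a : Fin 3) :
    q a * Module.finrank ℝ V = -LinearMap.trace ℝ V (J a * ((∑ b, q b • J b) + S)) := by
  simp [mul_add, Finset.mul_sum, hJ.trace_mul, hJ.trace_mul_eq_zero_of_commute hS]

theorem commute_sub_sum_mul_mul (hJ : IsQuatTriple J) (T : Module.End ℝ V) (a : Fin 3) :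
    Commute (T - ∑ c, J c * T * J c) (J a) := by
  have hleft : J a * ∑ c, J c * T * J c =
      -(T * J a) + ∑ c, ∑ d, eps3 a c d • (J d * T * J c) := by
    simp only [Finset.mul_sum, ← mul_assoc, hJ a, add_mul, neg_mul, Finset.sum_add_distrib,
      Finset.sum_mul, smul_mul_assoc, ite_mul, one_mul, zero_mul, Finset.sum_neg_distrib,
      Finset.sum_ite_eq, Finset.mem_univ, if_true]
  have hright : (∑ c, J c * T * J c) * J a =
      -(J a * T) + ∑ c, ∑ d, eps3 c a d • (J c * T * J d) := by
    simp only [Finset.sum_mul, mul_assoc, hJ _ a, mul_add, mul_neg, Finset.sum_add_distrib,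
      Finset.mul_sum, mul_smul_comm, mul_ite, mul_one, mul_zero, Finset.sum_neg_distrib,
      Finset.sum_ite_eq', Finset.mem_univ, if_true]
  have hsums : ∑ c, ∑ d, eps3 c a d • (J c * T * J d) =
      ∑ c, ∑ d, eps3 a c d • (J d * T * J c) := by
    rw [Finset.sum_comm]
    simp only [eps3_rotate]
  rw [commute_iff_eq, sub_mul, mul_sub, hleft, hright, hsums]
  abel

theorem four_smul_eq_sub_add_sum_mul_commutator (hJ : IsQuatTriple J) (T : Module.End ℝ V) :
    (4 : ℝ) • T = (T - ∑ a, J a * T * J a) + ∑ a, J a * (T * J a - J a * T) := by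
  simp only [mul_sub, ← mul_assoc, hJ.mul_self, Finset.sum_sub_distrib, neg_mul, one_mul,
    Finset.sum_const, Finset.card_univ, Fintype.card_fin]
  module

theorem mul_mem_span_sup_one (hJ : IsQuatTriple J) (a : Fin 3) {X : Module.End ℝ V}
    (hX : X ∈ Submodule.span ℝ (Set.range J)) :
    J a * X ∈ Submodule.span ℝ (Set.range J) ⊔ 1 := by
  induction hX using Submodule.span_induction with
  | mem X hX =>
    obtain ⟨b, rfl⟩ := hX
    rw [hJ a b, add_comm]
    refine Submodule.add_mem_sup (sum_mem fun c _ => ?_) (neg_mem ?_)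
    · exact Submodule.smul_mem _ _ (Submodule.subset_span (Set.mem_range_self c))
    · split_ifs
      exacts [Submodule.one_le.mp le_rfl, zero_mem _]
  | zero => simp
  | add X Y _ _ hX hY => simpa only [mul_add] using add_mem hX hY
  | smul t X _ hX => simpa only [mul_smul_comm] using Submodule.smul_mem _ t hX

theorem mem_span_sup_centralizer (hJ : IsQuatTriple J) {T : Module.End ℝ V}
    (hT : ∀ a, T * J a - J a * T ∈ Submodule.span ℝ (Set.range J)) :
    T ∈ Submodule.span ℝ (Set.range J) ⊔
      (Subalgebra.centralizer ℝ (Set.range J)).toSubmodule := by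
  have hcomm : T - ∑ a, J a * T * J a ∈ Subalgebra.centralizer ℝ (Set.range J) := by
    rintro _ ⟨a, rfl⟩
    exact (hJ.commute_sub_sum_mul_mul T a).eq.symm
  have hone : (1 : Submodule ℝ (Module.End ℝ V)) ≤
      (Subalgebra.centralizer ℝ (Set.range J)).toSubmodule :=
    Submodule.one_le.mpr (Subalgebra.one_mem _)
  rw [← Submodule.smul_mem_iff _ (four_ne_zero : (4 : ℝ) ≠ 0),
    hJ.four_smul_eq_sub_add_sum_mul_commutator]
  exact add_mem (Submodule.mem_sup_right hcomm)
    (sum_mem fun a _ => sup_le_sup_left hone _ (hJ.mul_mem_span_sup_one a (hT a)))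

end IsQuatTriple

/-- `su(2) ⊕ gl(r,ℍ)` decomposition of an endomorphism whose commutators
with a quaternionic triple lie in `span_ℝ {J^1,J^2,J^3}`: `T = Σ_a p_a J^a + T₀` with `T₀`
commuting with all `J^a`, uniquely, and `p_a = -tr(J^a T)/(4r)`. -/
theorem stmt9 {V : Type*} [AddCommGroup V] [Module ℝ V] [FiniteDimensional ℝ V]
    (r : ℕ) (hr : 1 ≤ r) (hdim : Module.finrank ℝ V = 4 * r)
    (J : Fin 3 → Module.End ℝ V) (hJ : IsQuatTriple J)
    (T : Module.End ℝ V)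
    (hT : ∀ a, T * J a - J a * T ∈ Submodule.span ℝ (Set.range J)) :
    ∃ (p : Fin 3 → ℝ) (T₀ : Module.End ℝ V),
      (∀ a, Commute T₀ (J a)) ∧
      T = (∑ a, p a • J a) + T₀ ∧
      (∀ a, p a = -(LinearMap.trace ℝ V (J a * T)) / (4 * (r : ℝ))) ∧
      (∀ (q : Fin 3 → ℝ) (T₁ : Module.End ℝ V),
        (∀ a, Commute T₁ (J a)) → T = (∑ a, q a • J a) + T₁ → q = p ∧ T₁ = T₀) := by
  have coeff_eq (q : Fin 3 → ℝ) (S : Module.End ℝ V) (hS : ∀ a, Commute S (J a))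
      (hTS : T = (∑ a, q a • J a) + S) (a : Fin 3) :
      q a = -(LinearMap.trace ℝ V (J a * T)) / (4 * (r : ℝ)) := by
    have hfinrank : (Module.finrank ℝ V : ℝ) = 4 * r := by exact_mod_cast hdim
    rw [eq_div_iff (by positivity), ← hfinrank, hTS, hJ.coeff_mul_finrank_eq_neg_trace hS]
  obtain ⟨X, hX, T₀, hT₀, hXT⟩ := Submodule.mem_sup.mp (hJ.mem_span_sup_centralizer hT)
  obtain ⟨p, rfl⟩ := (Submodule.mem_span_range_iff_exists_fun ℝ).mp hX
  have hcomm (a : Fin 3) : Commute T₀ (J a) := (hT₀ (J a) (Set.mem_range_self a)).symm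
  have hp := coeff_eq p T₀ hcomm hXT.symm
  refine ⟨p, T₀, hcomm, hXT.symm, hp, fun q T₁ hT₁ hqT => ?_⟩
  obtain rfl : q = p := funext fun a => (coeff_eq q T₁ hT₁ hqT a).trans (hp a).symm
  exact ⟨rfl, add_left_cancel (hqT.symm.trans hXT.symm)⟩
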